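/- Let ψ be a positive probability density on (0,∞), and let (f_n) and (g_n) be sequences of non-negative measurable functions such that ∫₀^∞ f_n(x) dx → 1 and ∫₀^∞ g_n(x) dx → 0 as n → ∞. Then D(f_n + g_n | ψ) − D(f_n | ψ) − D(g_n | ψ) → 0 as n → ∞ (in the sense that the difference is bounded in absolute value by a sequence tending to 0, whenever the entropies are finite; in particular D(f_n+g_n|ψ) is finite iff both D(f_n|ψ) and D(g_n|ψ) are). -/

import Mathlib

open MeasureTheory Set
open scoped ENNReal

/-- `L x = x * log x` (with `L 0 = 0`, automatic since `Real.log 0 = 0`). -/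
noncomputable def L (x : ℝ) : ℝ := x * Real.log x

/-- The relative entropy `D(f | ψ) = ∫₀^∞ L (f x / ψ x) * ψ x dx`, with values in
`(-∞, ∞]`, realized in `EReal`.  Since `L t ≥ -e⁻¹` for `t ≥ 0`, for a probability
density `ψ` on `(0,∞)` the integrand shifted by `e⁻¹ * ψ` is nonnegative, so this
is faithfully computed by a Lebesgue integral shifted back by `e⁻¹`. -/
noncomputable def relEnt (f ψ : ℝ → ℝ) : EReal :=
  ((∫⁻ x in Ioi (0 : ℝ),
      ENNReal.ofReal (L (f x / ψ x) * ψ x + Real.exp (-1) * ψ x) : ℝ≥0∞) : EReal)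
    - ((Real.exp (-1) : ℝ) : EReal)

/-! The defect of additivity `L (a + b) - L a - L b` is homogeneous of degree one, because
`L (c * a)` differs from `c * L a` by a term linear in `a`. Hence
`D(f + g | ψ) - D(f | ψ) - D(g | ψ)` is the integral of the defect of `f` and `g` themselves and
does not involve `ψ`. The defect is nonnegative and, by the log-sum inequality, concave, so by
Jensen's inequality this integral is at most the defect of `∫ f` and `∫ g`, which tends to zero when
`∫ g` does and `∫ f` stays bounded. -/

open Filter Topology

section Defect

variable {a b c t u v A B : ℝ}

lemma continuous_L : Continuous L := Real.continuous_mul_log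

lemma neg_exp_neg_one_le_L (ht : 0 ≤ t) : -Real.exp (-1) ≤ L t := by
  rcases ht.eq_or_lt with rfl | ht
  · simpa only [L, zero_mul, neg_nonpos] using Real.exp_nonneg (-1)
  · have h := Real.mul_exp_neg_le_exp_neg_one (-Real.log t)
    rw [neg_neg, Real.exp_log ht] at h
    unfold L
    linarith

lemma L_div_mul (a : ℝ) (hc : c ≠ 0) : L (a / c) * c = L a - a * Real.log c := by
  rcases eq_or_ne a 0 with rfl | ha
  · simp [L]
  · rw [L, L, Real.log_div ha hc]
    field_simp

/-- The entropy of mixing of two masses `a` and `b`: the defect of additivity of `L`. It equals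
`(a + b) * H(a / (a + b))` with `H` the binary entropy. -/
noncomputable def mixingEntropy (a b : ℝ) : ℝ := L (a + b) - L a - L b

lemma mixingEntropy_eq (a b : ℝ) :
    mixingEntropy a b =
      a * (Real.log (a + b) - Real.log a) + b * (Real.log (a + b) - Real.log b) := by
  unfold mixingEntropy L
  ring

lemma continuous_mixingEntropy : Continuous fun p : ℝ × ℝ => mixingEntropy p.1 p.2 :=
  ((continuous_L.comp (continuous_fst.add continuous_snd)).sub
    (continuous_L.comp continuous_fst)).sub (continuous_L.comp continuous_snd)

lemma mixingEntropy_zero_right (a : ℝ) : mixingEntropy a 0 = 0 := by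
  simp [mixingEntropy, L]

lemma mul_log_sub_log_nonneg (ha : 0 ≤ a) (hab : a ≤ b) :
    0 ≤ a * (Real.log b - Real.log a) := by
  rcases ha.eq_or_lt with rfl | ha
  · rw [zero_mul]
  · exact mul_nonneg ha.le (sub_nonneg.2 (Real.log_le_log ha hab))

lemma mixingEntropy_nonneg (ha : 0 ≤ a) (hb : 0 ≤ b) : 0 ≤ mixingEntropy a b := by
  rw [mixingEntropy_eq]
  exact add_nonneg (mul_log_sub_log_nonneg ha (le_add_of_nonneg_right hb))
    (mul_log_sub_log_nonneg hb (le_add_of_nonneg_left ha))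

lemma log_sum_inequality (hu : 0 ≤ u) (hv : 0 ≤ v) (hA : 0 < A) (hB : 0 < B) :
    L (u + v) - (u + v) * Real.log (A + B) ≤
      (L u - u * Real.log A) + (L v - v * Real.log B) := by
  have hAB : 0 < A + B := add_pos hA hB
  have jensen : L (A / (A + B) * (u / A) + B / (A + B) * (v / B)) ≤
      A / (A + B) * L (u / A) + B / (A + B) * L (v / B) :=
    Real.convexOn_mul_log.2 (div_nonneg hu hA.le) (div_nonneg hv hB.le)
      (div_nonneg hA.le hAB.le) (div_nonneg hB.le hAB.le)
      (by rw [← add_div, div_self hAB.ne'])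
  have barycenter : A / (A + B) * (u / A) + B / (A + B) * (v / B) = (u + v) / (A + B) := by
    field_simp
  rw [barycenter] at jensen
  calc L (u + v) - (u + v) * Real.log (A + B)
      = L ((u + v) / (A + B)) * (A + B) := (L_div_mul _ hAB.ne').symm
    _ ≤ (A / (A + B) * L (u / A) + B / (A + B) * L (v / B)) * (A + B) :=
        mul_le_mul_of_nonneg_right jensen hAB.le
    _ = L (u / A) * A + L (v / B) * B := by field_simp
    _ = (L u - u * Real.log A) + (L v - v * Real.log B) := by
        rw [L_div_mul _ hA.ne', L_div_mul _ hB.ne']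

-- The coefficients of `u` and `v` are the partial derivatives of `mixingEntropy` at `(A, B)`, and
-- homogeneity removes the constant term.
lemma mixingEntropy_le_tangent (hu : 0 ≤ u) (hv : 0 ≤ v) (hA : 0 ≤ A) (hB : 0 ≤ B)
    (hAu : A = 0 → u = 0) (hBv : B = 0 → v = 0) :
    mixingEntropy u v ≤
      u * (Real.log (A + B) - Real.log A) + v * (Real.log (A + B) - Real.log B) := by
  rcases hA.eq_or_lt with rfl | hA
  · simp [mixingEntropy, L, hAu rfl]
  rcases hB.eq_or_lt with rfl | hB
  · simp [mixingEntropy, L, hBv rfl]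
  have := log_sum_inequality hu hv hA hB
  unfold mixingEntropy
  linarith

lemma mixingEntropy_mono_left (hu : 0 ≤ u) (huA : u ≤ A) (hb : 0 ≤ b) :
    mixingEntropy u b ≤ mixingEntropy A b := by
  rcases (hu.trans huA).eq_or_lt with rfl | hA
  · rw [huA.antisymm hu]
  have slope_nonneg : 0 ≤ Real.log (A + b) - Real.log A :=
    sub_nonneg.2 (Real.log_le_log hA (le_add_of_nonneg_right hb))
  calc mixingEntropy u b
      ≤ u * (Real.log (A + b) - Real.log A) + b * (Real.log (A + b) - Real.log b) :=
        mixingEntropy_le_tangent hu hb hA.le hb (fun h => absurd h hA.ne') id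
    _ ≤ A * (Real.log (A + b) - Real.log A) + b * (Real.log (A + b) - Real.log b) := by gcongr
    _ = mixingEntropy A b := (mixingEntropy_eq A b).symm

lemma tendsto_mixingEntropy_of_isBoundedUnder {ι : Type*} {l : Filter ι} {p q : ι → ℝ}
    (hp : ∀ i, 0 ≤ p i) (hp_bdd : l.IsBoundedUnder (· ≤ ·) p)
    (hq : ∀ i, 0 ≤ q i) (hq_lim : Tendsto q l (𝓝 0)) :
    Tendsto (fun i => mixingEntropy (p i) (q i)) l (𝓝 0) := by
  obtain ⟨M, hM⟩ := hp_bdd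
  have upper_lim : Tendsto (fun i => mixingEntropy M (q i)) l (𝓝 0) := by
    have h := (continuous_mixingEntropy.tendsto (M, 0)).comp (tendsto_const_nhds.prodMk_nhds hq_lim)
    rwa [mixingEntropy_zero_right] at h
  refine tendsto_of_tendsto_of_tendsto_of_le_of_le' tendsto_const_nhds upper_lim
    (.of_forall fun i => mixingEntropy_nonneg (hp i) (hq i)) ?_
  filter_upwards [eventually_map.1 hM] with i hi
  exact mixingEntropy_mono_left (hp i) hi (hq i)

end Defect

section Density

variable {α : Type*} {f g ψ : α → ℝ} {x : α}

/-- The integrand `L (f / ψ) * ψ` of the relative entropy of `f` with respect to `ψ`, shifted by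
`exp (-1) * ψ` so that it is nonnegative. -/
noncomputable def shiftedEntropyDensity (f ψ : α → ℝ) (x : α) : ℝ :=
  L (f x / ψ x) * ψ x + Real.exp (-1) * ψ x

lemma shiftedEntropyDensity_nonneg (hf : 0 ≤ f x) (hψ : 0 ≤ ψ x) :
    0 ≤ shiftedEntropyDensity f ψ x := by
  have := mul_le_mul_of_nonneg_right (neg_exp_neg_one_le_L (div_nonneg hf hψ)) hψ
  unfold shiftedEntropyDensity
  linarith

lemma shiftedEntropyDensity_add (hψ : ψ x ≠ 0) :
    shiftedEntropyDensity (f + g) ψ x + Real.exp (-1) * ψ x =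
      shiftedEntropyDensity f ψ x + shiftedEntropyDensity g ψ x + mixingEntropy (f x) (g x) := by
  simp only [shiftedEntropyDensity, mixingEntropy, Pi.add_apply, L_div_mul _ hψ]
  ring

end Density

section Measure

variable {α : Type*} [MeasurableSpace α] {μ : Measure α} {f g ψ : α → ℝ}

lemma ae_mixingEntropy_nonneg (hf : 0 ≤ᵐ[μ] f) (hg : 0 ≤ᵐ[μ] g) :
    0 ≤ᵐ[μ] fun x => mixingEntropy (f x) (g x) := by
  filter_upwards [hf, hg] with x hfx hgx using mixingEntropy_nonneg hfx hgx

lemma integrable_mixingEntropy (hf : 0 ≤ᵐ[μ] f) (hf_int : Integrable f μ)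
    (hg : 0 ≤ᵐ[μ] g) (hg_int : Integrable g μ) :
    Integrable (fun x => mixingEntropy (f x) (g x)) μ := by
  refine integrable_of_le_of_le
    (continuous_mixingEntropy.comp_aestronglyMeasurable₂ hf_int.1 hg_int.1)
    (g₁ := fun _ => 0)
    (g₂ := fun x => f x * (Real.log (1 + 1) - Real.log 1) + g x * (Real.log (1 + 1) - Real.log 1))
    (ae_mixingEntropy_nonneg hf hg) ?_ (integrable_zero _ _ _)
    ((hf_int.mul_const _).add (hg_int.mul_const _))
  filter_upwards [hf, hg] with x hfx hgx
  exact mixingEntropy_le_tangent hfx hgx zero_le_one zero_le_one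
    (absurd · one_ne_zero) (absurd · one_ne_zero)

lemma integral_mixingEntropy_le (hf : 0 ≤ᵐ[μ] f) (hf_int : Integrable f μ)
    (hg : 0 ≤ᵐ[μ] g) (hg_int : Integrable g μ) :
    ∫ x, mixingEntropy (f x) (g x) ∂μ ≤ mixingEntropy (∫ x, f x ∂μ) (∫ x, g x ∂μ) := by
  set A := ∫ x, f x ∂μ
  set B := ∫ x, g x ∂μ
  have hAf : A = 0 → f =ᵐ[μ] 0 := (integral_eq_zero_iff_of_nonneg_ae hf hf_int).1
  have hBg : B = 0 → g =ᵐ[μ] 0 := (integral_eq_zero_iff_of_nonneg_ae hg hg_int).1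
  calc ∫ x, mixingEntropy (f x) (g x) ∂μ
      ≤ ∫ x, (f x * (Real.log (A + B) - Real.log A)
          + g x * (Real.log (A + B) - Real.log B)) ∂μ := by
        refine integral_mono_ae (integrable_mixingEntropy hf hf_int hg hg_int)
          ((hf_int.mul_const _).add (hg_int.mul_const _)) ?_
        filter_upwards [hf, hg, eventually_imp_distrib_left.2 hAf,
          eventually_imp_distrib_left.2 hBg] with x hfx hgx hAfx hBgx
        exact mixingEntropy_le_tangent hfx hgx (integral_nonneg_of_ae hf)
          (integral_nonneg_of_ae hg) hAfx hBgx
    _ = A * (Real.log (A + B) - Real.log A) + B * (Real.log (A + B) - Real.log B) := by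
        rw [integral_add (hf_int.mul_const _) (hg_int.mul_const _), integral_mul_const,
          integral_mul_const]
    _ = mixingEntropy A B := (mixingEntropy_eq A B).symm

/-- The relative entropy of `f` with respect to a probability density `ψ` on an arbitrary measure
space, encoded as in `relEnt`: the shift of the integrand contributes `exp (-1)` because
`∫ x, ψ x ∂μ = 1`. -/
noncomputable def relativeEntropy (μ : Measure α) (f ψ : α → ℝ) : EReal :=
  ((∫⁻ x, ENNReal.ofReal (shiftedEntropyDensity f ψ x) ∂μ : ℝ≥0∞) : EReal)
    - ((Real.exp (-1) : ℝ) : EReal)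

lemma relEnt_eq_relativeEntropy (f ψ : ℝ → ℝ) :
    relEnt f ψ = relativeEntropy (volume.restrict (Ioi 0)) f ψ := rfl

lemma aemeasurable_shiftedEntropyDensity (hf : AEMeasurable f μ) (hψ : AEMeasurable ψ μ) :
    AEMeasurable (shiftedEntropyDensity f ψ) μ :=
  ((continuous_L.measurable.comp_aemeasurable (hf.div hψ)).mul hψ).add (hψ.const_mul _)

-- Subtraction is avoided so that the identity also holds when the integrals are infinite.
lemma lintegral_shiftedEntropyDensity_add (hψ : ∀ᵐ x ∂μ, 0 < ψ x) (hψ_prob : ∫ x, ψ x ∂μ = 1)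
    (hf : 0 ≤ᵐ[μ] f) (hf_int : Integrable f μ) (hg : 0 ≤ᵐ[μ] g) (hg_int : Integrable g μ) :
    (∫⁻ x, ENNReal.ofReal (shiftedEntropyDensity (f + g) ψ x) ∂μ) + ENNReal.ofReal (Real.exp (-1)) =
      (∫⁻ x, ENNReal.ofReal (shiftedEntropyDensity f ψ x) ∂μ)
        + (∫⁻ x, ENNReal.ofReal (shiftedEntropyDensity g ψ x) ∂μ)
        + ENNReal.ofReal (∫ x, mixingEntropy (f x) (g x) ∂μ) := by
  have hψ_int : Integrable ψ μ := integrable_of_integral_eq_one hψ_prob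
  have hmix_int := integrable_mixingEntropy hf hf_int hg hg_int
  have hmix_nonneg := ae_mixingEntropy_nonneg hf hg
  have hshift : ENNReal.ofReal (Real.exp (-1)) =
      ∫⁻ x, ENNReal.ofReal (Real.exp (-1) * ψ x) ∂μ := by
    rw [← ofReal_integral_eq_lintegral_ofReal (hψ_int.const_mul _)
      (hψ.mono fun x hx => mul_nonneg (Real.exp_nonneg _) hx.le), integral_const_mul, hψ_prob,
      mul_one]
  rw [hshift, ofReal_integral_eq_lintegral_ofReal hmix_int hmix_nonneg,
    ← lintegral_add_right' _ (hψ_int.const_mul _).aemeasurable.ennreal_ofReal,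
    ← lintegral_add_right' _
      (aemeasurable_shiftedEntropyDensity hg_int.aemeasurable hψ_int.aemeasurable).ennreal_ofReal,
    ← lintegral_add_right' _ hmix_int.aemeasurable.ennreal_ofReal]
  refine lintegral_congr_ae ?_
  filter_upwards [hψ, hf, hg, hmix_nonneg] with x hψx hfx hgx hmixx
  have hSf := shiftedEntropyDensity_nonneg hfx hψx.le
  have hSg := shiftedEntropyDensity_nonneg hgx hψx.le
  have hSfg := shiftedEntropyDensity_nonneg (f := f + g) (add_nonneg hfx hgx) hψx.le
  rw [← ENNReal.ofReal_add hSfg (mul_nonneg (Real.exp_nonneg _) hψx.le),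
    ← ENNReal.ofReal_add hSf hSg, ← ENNReal.ofReal_add (add_nonneg hSf hSg) hmixx,
    shiftedEntropyDensity_add hψx.ne']

lemma sub_coe_eq_of_add_coe_eq {x y z w : EReal} {r : ℝ} (h : x + r = y + z + w) :
    x - r = (y - r) + (z - r) + w := by
  calc x - r = x + r - r - r := by rw [EReal.add_sub_cancel_right]
    _ = y + z + w - r - r := by rw [h]
    _ = (y - r) + (z - r) + w := by
        simp only [sub_eq_add_neg]
        ac_rfl

lemma relativeEntropy_add (hψ : ∀ᵐ x ∂μ, 0 < ψ x) (hψ_prob : ∫ x, ψ x ∂μ = 1)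
    (hf : 0 ≤ᵐ[μ] f) (hf_int : Integrable f μ) (hg : 0 ≤ᵐ[μ] g) (hg_int : Integrable g μ) :
    relativeEntropy μ (f + g) ψ = relativeEntropy μ f ψ + relativeEntropy μ g ψ
      + ((∫ x, mixingEntropy (f x) (g x) ∂μ : ℝ) : EReal) := by
  have hmix_nonneg : 0 ≤ ∫ x, mixingEntropy (f x) (g x) ∂μ :=
    integral_nonneg_of_ae (ae_mixingEntropy_nonneg hf hg)
  have h := congrArg ((↑) : ℝ≥0∞ → EReal)
    (lintegral_shiftedEntropyDensity_add hψ hψ_prob hf hf_int hg hg_int)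
  simp only [EReal.coe_ennreal_add, EReal.coe_ennreal_ofReal, max_eq_left (Real.exp_nonneg (-1)),
    max_eq_left hmix_nonneg] at h
  exact sub_coe_eq_of_add_coe_eq h

lemma relativeEntropy_ne_bot (μ : Measure α) (f ψ : α → ℝ) : relativeEntropy μ f ψ ≠ ⊥ :=
  EReal.add_ne_bot_iff.2 ⟨EReal.coe_ennreal_ne_bot _, EReal.coe_ne_bot (-Real.exp (-1))⟩

lemma relativeEntropy_add_lt_top_iff (hψ : ∀ᵐ x ∂μ, 0 < ψ x) (hψ_prob : ∫ x, ψ x ∂μ = 1)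
    (hf : 0 ≤ᵐ[μ] f) (hf_int : Integrable f μ) (hg : 0 ≤ᵐ[μ] g) (hg_int : Integrable g μ) :
    relativeEntropy μ (f + g) ψ < ⊤ ↔ relativeEntropy μ f ψ < ⊤ ∧ relativeEntropy μ g ψ < ⊤ := by
  rw [relativeEntropy_add hψ hψ_prob hf hf_int hg hg_int, lt_top_iff_ne_top, lt_top_iff_ne_top,
    lt_top_iff_ne_top,
    EReal.add_ne_top_iff_of_ne_bot_of_ne_top (EReal.coe_ne_bot _) (EReal.coe_ne_top _),
    EReal.add_ne_top_iff_ne_top₂ (relativeEntropy_ne_bot μ f ψ) (relativeEntropy_ne_bot μ g ψ)]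

lemma toReal_relativeEntropy_add (hψ : ∀ᵐ x ∂μ, 0 < ψ x) (hψ_prob : ∫ x, ψ x ∂μ = 1)
    (hf : 0 ≤ᵐ[μ] f) (hf_int : Integrable f μ) (hg : 0 ≤ᵐ[μ] g) (hg_int : Integrable g μ)
    (hDf : relativeEntropy μ f ψ < ⊤) (hDg : relativeEntropy μ g ψ < ⊤) :
    (relativeEntropy μ (f + g) ψ).toReal = (relativeEntropy μ f ψ).toReal
      + (relativeEntropy μ g ψ).toReal + ∫ x, mixingEntropy (f x) (g x) ∂μ := by
  have hf_bot := relativeEntropy_ne_bot μ f ψ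
  have hg_bot := relativeEntropy_ne_bot μ g ψ
  rw [relativeEntropy_add hψ hψ_prob hf hf_int hg hg_int,
    EReal.toReal_add (EReal.add_ne_top hDf.ne hDg.ne) (EReal.add_ne_bot_iff.2 ⟨hf_bot, hg_bot⟩)
      (EReal.coe_ne_top _) (EReal.coe_ne_bot _),
    EReal.toReal_add hDf.ne hf_bot hDg.ne hg_bot, EReal.toReal_coe]

lemma abs_toReal_relativeEntropy_add_sub_sub_le (hψ : ∀ᵐ x ∂μ, 0 < ψ x)
    (hψ_prob : ∫ x, ψ x ∂μ = 1)
    (hf : 0 ≤ᵐ[μ] f) (hf_int : Integrable f μ) (hg : 0 ≤ᵐ[μ] g) (hg_int : Integrable g μ)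
    (hDf : relativeEntropy μ f ψ < ⊤) (hDg : relativeEntropy μ g ψ < ⊤) :
    |(relativeEntropy μ (f + g) ψ).toReal - (relativeEntropy μ f ψ).toReal
        - (relativeEntropy μ g ψ).toReal| ≤ mixingEntropy (∫ x, f x ∂μ) (∫ x, g x ∂μ) := by
  have hmix_nonneg : 0 ≤ ∫ x, mixingEntropy (f x) (g x) ∂μ :=
    integral_nonneg_of_ae (ae_mixingEntropy_nonneg hf hg)
  rw [toReal_relativeEntropy_add hψ hψ_prob hf hf_int hg hg_int hDf hDg, add_assoc,
    add_sub_cancel_left, add_sub_cancel_left, abs_of_nonneg hmix_nonneg]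
  exact integral_mixingEntropy_le hf hf_int hg hg_int

end Measure

theorem stmt7_general {α ι : Type*} [MeasurableSpace α] {μ : Measure α} {l : Filter ι}
    {ψ : α → ℝ} (hψ : ∀ᵐ x ∂μ, 0 < ψ x) (hψ_prob : ∫ x, ψ x ∂μ = 1) {f g : ι → α → ℝ}
    (hf : ∀ i, 0 ≤ᵐ[μ] f i) (hf_int : ∀ i, Integrable (f i) μ)
    (hg : ∀ i, 0 ≤ᵐ[μ] g i) (hg_int : ∀ i, Integrable (g i) μ)
    (hf_bdd : l.IsBoundedUnder (· ≤ ·) fun i => ∫ x, f i x ∂μ)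
    (hg_lim : Tendsto (fun i => ∫ x, g i x ∂μ) l (𝓝 0)) :
    (∀ i, relativeEntropy μ (f i + g i) ψ < ⊤ ↔
        relativeEntropy μ (f i) ψ < ⊤ ∧ relativeEntropy μ (g i) ψ < ⊤) ∧
      ∃ ε : ι → ℝ, Tendsto ε l (𝓝 0) ∧
        ∀ i, relativeEntropy μ (f i) ψ < ⊤ → relativeEntropy μ (g i) ψ < ⊤ →
          |(relativeEntropy μ (f i + g i) ψ).toReal - (relativeEntropy μ (f i) ψ).toReal
              - (relativeEntropy μ (g i) ψ).toReal| ≤ ε i :=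
  ⟨fun i => relativeEntropy_add_lt_top_iff hψ hψ_prob (hf i) (hf_int i) (hg i) (hg_int i),
    fun i => mixingEntropy (∫ x, f i x ∂μ) (∫ x, g i x ∂μ),
    tendsto_mixingEntropy_of_isBoundedUnder (fun i => integral_nonneg_of_ae (hf i)) hf_bdd
      (fun i => integral_nonneg_of_ae (hg i)) hg_lim,
    fun i => abs_toReal_relativeEntropy_add_sub_sub_le hψ hψ_prob (hf i) (hf_int i) (hg i)
      (hg_int i)⟩

theorem stmt7 (ψ : ℝ → ℝ) (hψmeas : Measurable ψ)
    (hψpos : ∀ x ∈ Ioi (0 : ℝ), 0 < ψ x)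
    (hψint : IntegrableOn ψ (Ioi (0 : ℝ)))
    (hψprob : ∫ x in Ioi (0 : ℝ), ψ x = 1)
    (f g : ℕ → ℝ → ℝ)
    (hfmeas : ∀ n, Measurable (f n)) (hf0 : ∀ n x, 0 ≤ f n x)
    (hfint : ∀ n, IntegrableOn (f n) (Ioi (0 : ℝ)))
    (hgmeas : ∀ n, Measurable (g n)) (hg0 : ∀ n x, 0 ≤ g n x)
    (hgint : ∀ n, IntegrableOn (g n) (Ioi (0 : ℝ)))
    (hflim : Filter.Tendsto (fun n => ∫ x in Ioi (0 : ℝ), f n x)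
      Filter.atTop (nhds 1))
    (hglim : Filter.Tendsto (fun n => ∫ x in Ioi (0 : ℝ), g n x)
      Filter.atTop (nhds 0)) :
    (∀ n, relEnt (fun x => f n x + g n x) ψ < ⊤ ↔
        relEnt (f n) ψ < ⊤ ∧ relEnt (g n) ψ < ⊤) ∧
      ∃ ε : ℕ → ℝ, Filter.Tendsto ε Filter.atTop (nhds 0) ∧
        ∀ n, relEnt (f n) ψ < ⊤ → relEnt (g n) ψ < ⊤ →
          |(relEnt (fun x => f n x + g n x) ψ).toReal
              - (relEnt (f n) ψ).toReal - (relEnt (g n) ψ).toReal| ≤ ε n := by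
  simp only [relEnt_eq_relativeEntropy]
  exact stmt7_general (ae_restrict_of_forall_mem measurableSet_Ioi hψpos) hψprob
    (fun n => .of_forall (hf0 n)) hfint (fun n => .of_forall (hg0 n)) hgint
    hflim.isBoundedUnder_le hglim
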